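/- Let n ≥ 2 and 1 ≤ g ≤ n−1. Let P ⊆ ℝ^n be the convex hull of a finite set, with nonempty interior, and let U ⊆ ℝ^n be a linear subspace of dimension n−g with P ∩ U ≠ ∅. Assume the following genericity condition: for every face Q of P with Q ∩ U ≠ ∅, the relative interior of Q meets U and the direction of the affine span of Q together with U spans ℝ^n. Then P ∩ U is a polytope of dimension n−g, and the map F ↦ F ∩ U is a bijection from the set of facets F of P with F ∩ U ≠ ∅ onto the set of facets of P ∩ U. -/

import Mathlib

open scoped RealInnerProductSpace

/-- A (nonempty, exposed) face of a convex set `C ⊆ ℝ^n`: a nonempty set of the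
form `{x ∈ C | ⟨x, φ⟩ = sup_{y ∈ C} ⟨y, φ⟩}` for some `φ ∈ ℝ^n`.  Taking `φ = 0`
shows that `C` itself is a face. -/
def IsFaceOf {n : ℕ} (C F : Set (EuclideanSpace ℝ (Fin n))) : Prop :=
  F.Nonempty ∧ ∃ φ : EuclideanSpace ℝ (Fin n),
    F = {x ∈ C | ⟪x, φ⟫ = sSup ((fun y => ⟪y, φ⟫) '' C)}

/-- The dimension of a subset of `ℝ^n`: the dimension of the direction of its
affine span. -/
noncomputable def setDim {n : ℕ} (s : Set (EuclideanSpace ℝ (Fin n))) : ℕ :=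
  Module.finrank ℝ (affineSpan ℝ s).direction

open Set Topology

lemma aux_small {n : ℕ} {Q : Set (EuclideanSpace ℝ (Fin n))} {z v : EuclideanSpace ℝ (Fin n)}
    (hz : z ∈ intrinsicInterior ℝ Q) (hv : v ∈ (affineSpan ℝ Q).direction) :
    ∃ ε : ℝ, 0 < ε ∧ z + ε • v ∈ Q ∧ z + (-ε) • v ∈ Q := by
  obtain ⟨y, hy, rfl⟩ := mem_intrinsicInterior.1 hz
  have hmem : ∀ t : ℝ, (y : EuclideanSpace ℝ (Fin n)) + t • v ∈ affineSpan ℝ Q := by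
    intro t
    have := AffineSubspace.vadd_mem_of_mem_direction
      ((affineSpan ℝ Q).direction.smul_mem t hv) y.2
    rwa [vadd_eq_add, add_comm] at this
  let f : ℝ → affineSpan ℝ Q := fun t => ⟨y + t • v, hmem t⟩
  have hf : Continuous f := by
    apply Continuous.subtype_mk
    fun_prop
  have hf0 : f 0 = y := by
    apply Subtype.ext
    simp [f]
  have hev : ∀ᶠ t in 𝓝 (0 : ℝ), f t ∈ ((↑) ⁻¹' Q : Set (affineSpan ℝ Q)) := by
    apply hf.continuousAt.eventually_mem
    rw [hf0]
    exact mem_interior_iff_mem_nhds.1 hy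
  obtain ⟨δ, hδ, hb⟩ := Metric.eventually_nhds_iff.1 hev
  refine ⟨δ / 2, by positivity, ?_, ?_⟩
  · apply hb
    rw [Real.dist_eq, sub_zero, abs_of_pos] <;> linarith
  · apply hb
    rw [Real.dist_eq, sub_zero, abs_neg, abs_of_pos] <;> linarith

lemma aux_dir {n : ℕ} {Q : Set (EuclideanSpace ℝ (Fin n))} {z : EuclideanSpace ℝ (Fin n)}
    {U : Submodule ℝ (EuclideanSpace ℝ (Fin n))}
    (hz : z ∈ intrinsicInterior ℝ Q) (hzU : z ∈ U) :
    (affineSpan ℝ (Q ∩ (U : Set (EuclideanSpace ℝ (Fin n))))).direction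
      = (affineSpan ℝ Q).direction ⊓ U := by
  apply le_antisymm
  · apply le_inf
    · exact AffineSubspace.direction_le (affineSpan_mono ℝ inter_subset_left)
    · rw [direction_affineSpan, vectorSpan_def, Submodule.span_le]
      rintro _ ⟨a, ha, b, hb, rfl⟩
      exact U.sub_mem ha.2 hb.2
  · rintro v ⟨hv, hvU⟩
    obtain ⟨ε, hε, h1, -⟩ := aux_small hz hv
    have h2 : z + ε • v ∈ affineSpan ℝ (Q ∩ (U : Set (EuclideanSpace ℝ (Fin n)))) :=
      subset_affineSpan _ _ ⟨h1, U.add_mem hzU (U.smul_mem _ hvU)⟩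
    have h3 : z ∈ affineSpan ℝ (Q ∩ (U : Set (EuclideanSpace ℝ (Fin n)))) :=
      subset_affineSpan _ _ ⟨intrinsicInterior_subset hz, hzU⟩
    have h4 := AffineSubspace.vsub_mem_direction h2 h3
    rw [vsub_eq_sub, add_sub_cancel_left] at h4
    exact (Submodule.smul_mem_iff _ hε.ne').1 h4

lemma aux_zero {n : ℕ} {Q : Set (EuclideanSpace ℝ (Fin n))} {z v φ : EuclideanSpace ℝ (Fin n)}
    (hz : z ∈ intrinsicInterior ℝ Q) (hv : v ∈ (affineSpan ℝ Q).direction)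
    {T : Set (EuclideanSpace ℝ (Fin n))}
    (hT : ∀ y ∈ Q, y ∈ T → ⟪y, φ⟫ ≤ ⟪z, φ⟫) (hvT : ∀ t : ℝ, z + t • v ∈ T) : ⟪v, φ⟫ = 0 := by
  obtain ⟨ε, hε, h1, h2⟩ := aux_small hz hv
  have a := hT _ h1 (hvT _)
  have b := hT _ h2 (hvT _)
  rw [inner_add_left, real_inner_smul_left] at a b
  have : ε * ⟪v, φ⟫ = 0 := by linarith
  exact (mul_eq_zero.1 this).resolve_left hε.ne'

lemma aux_const {n : ℕ} {F : Set (EuclideanSpace ℝ (Fin n))} {φ v : EuclideanSpace ℝ (Fin n)}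
    {c : ℝ} (h : ∀ x ∈ F, ⟪x, φ⟫ = c) (hv : v ∈ (affineSpan ℝ F).direction) : ⟪v, φ⟫ = 0 := by
  have : (affineSpan ℝ F).direction ≤ LinearMap.ker (innerₗ (EuclideanSpace ℝ (Fin n)) φ) := by
    rw [direction_affineSpan, vectorSpan_def, Submodule.span_le]
    rintro _ ⟨a, ha, b, hb, rfl⟩
    have h1 := h a ha
    have h2 := h b hb
    rw [SetLike.mem_coe, LinearMap.mem_ker, innerₗ_apply_apply, real_inner_comm]
    change ⟪a - b, φ⟫ = 0
    rw [inner_sub_left]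
    linarith
  have h1 := this hv
  rw [LinearMap.mem_ker, innerₗ_apply_apply, real_inner_comm] at h1
  exact h1

lemma aux_face {n : ℕ} {C F : Set (EuclideanSpace ℝ (Fin n))} (hC : IsCompact C)
    (h : IsFaceOf C F) : F.Nonempty ∧ ∃ (φ : EuclideanSpace ℝ (Fin n)) (c : ℝ),
      (∀ y ∈ C, ⟪y, φ⟫ ≤ c) ∧ F = {x ∈ C | ⟪x, φ⟫ = c} := by
  obtain ⟨hne, φ, hF⟩ := h
  refine ⟨hne, φ, _, ?_, hF⟩
  intro y hy
  exact le_csSup (hC.image (f := fun y => ⟪y, φ⟫) (by fun_prop)).bddAbove ⟨y, hy, rfl⟩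

lemma aux_face' {n : ℕ} {C : Set (EuclideanSpace ℝ (Fin n))} {φ : EuclideanSpace ℝ (Fin n)} {c : ℝ}
    (h : ∀ y ∈ C, ⟪y, φ⟫ ≤ c) (hne : {x ∈ C | ⟪x, φ⟫ = c}.Nonempty) :
    IsFaceOf C {x ∈ C | ⟪x, φ⟫ = c} := by
  refine ⟨hne, φ, ?_⟩
  obtain ⟨x, hx, hxc⟩ := hne
  have : IsGreatest ((fun y => ⟪y, φ⟫) '' C) c := by
    refine ⟨⟨x, hx, hxc⟩, ?_⟩
    rintro _ ⟨y, hy, rfl⟩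
    exact h y hy
  rw [this.csSup_eq]

lemma aux_poly {n : ℕ} (S : Finset (EuclideanSpace ℝ (Fin n)))
    (U : Submodule ℝ (EuclideanSpace ℝ (Fin n))) :
    ∃ t : Finset (EuclideanSpace ℝ (Fin n)),
      convexHull ℝ (S : Set (EuclideanSpace ℝ (Fin n))) ∩ (U : Set (EuclideanSpace ℝ (Fin n)))
        = convexHull ℝ (t : Set (EuclideanSpace ℝ (Fin n))) := by
  classical
  set K := convexHull ℝ (S : Set (EuclideanSpace ℝ (Fin n))) ∩ (U : Set (EuclideanSpace ℝ (Fin n)))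
    with hK
  have hKc : IsCompact K :=
    (S.finite_toSet.isCompact_convexHull (𝕜 := ℝ)).inter_right U.closed_of_finiteDimensional
  have hKconv : Convex ℝ K := (convex_convexHull ℝ _).inter U.convex
  have hw : ∀ x : EuclideanSpace ℝ (Fin n), ∃ w : EuclideanSpace ℝ (Fin n) → ℝ, x ∈ K →
      (∀ y ∈ S, 0 ≤ w y) ∧ ∑ y ∈ S, w y = 1 ∧ ∑ y ∈ S, w y • y = x := by
    intro x
    by_cases hx : x ∈ K
    · obtain ⟨w, h⟩ := (Finset.mem_convexHull' (R := ℝ)).1 hx.1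
      exact ⟨w, fun _ => h⟩
    · exact ⟨0, fun h => absurd h hx⟩
  choose w hw using hw
  have hfin : (K.extremePoints ℝ).Finite := by
    apply Set.Finite.of_finite_image (f := fun x => S.filter (fun y => 0 < w x y))
    · exact (S.powerset.finite_toSet).subset (by
        rintro _ ⟨x, -, rfl⟩
        exact Finset.mem_coe.2 (Finset.mem_powerset.2 (Finset.filter_subset _ _)))
    · intro x hx y hy hxy
      obtain ⟨hx0, hx1, hxs⟩ := hw x hx.1
      obtain ⟨hy0, hy1, hys⟩ := hw y hy.1
      -- find ε
      have hε : ∃ ε : ℝ, 0 < ε ∧ ∀ s ∈ S, 0 ≤ w x s + ε * (w x s - w y s) := by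
        have : ∀ᶠ ε in 𝓝[>] (0 : ℝ), ∀ s ∈ S, 0 ≤ w x s + ε * (w x s - w y s) := by
          rw [Filter.eventually_all_finset]
          intro s hs
          rcases (hx0 s hs).lt_or_eq with h | h
          · have hc : Filter.Tendsto (fun ε : ℝ => w x s + ε * (w x s - w y s)) (𝓝 0)
                (𝓝 (w x s + 0 * (w x s - w y s))) := by
              apply Continuous.tendsto (by fun_prop)
            rw [zero_mul, add_zero] at hc
            filter_upwards [(hc.mono_left nhdsWithin_le_nhds).eventually (lt_mem_nhds h)] with ε h
            exact h.le
          · have h' : w y s = 0 := by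
              by_contra hne
              have hpos : 0 < w y s := lt_of_le_of_ne (hy0 s hs) (Ne.symm hne)
              have : s ∈ S.filter (fun t => 0 < w y t) := Finset.mem_filter.2 ⟨hs, hpos⟩
              have hxy' : S.filter (fun t => 0 < w x t) = S.filter (fun t => 0 < w y t) := hxy
              rw [← hxy'] at this
              have := (Finset.mem_filter.1 this).2
              linarith
            filter_upwards with ε
            rw [h', ← h]; simp
        obtain ⟨ε, h1, h2⟩ := (this.and self_mem_nhdsWithin).exists
        exact ⟨ε, h2, h1⟩
      obtain ⟨ε, hε, hpos⟩ := hε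
      have hzK : x + ε • (x - y) ∈ K := by
        refine ⟨(Finset.mem_convexHull' (R := ℝ)).2
          ⟨fun s => w x s + ε * (w x s - w y s), hpos, ?_, ?_⟩, ?_⟩
        · rw [Finset.sum_add_distrib, ← Finset.mul_sum, Finset.sum_sub_distrib, hx1, hy1]
          simp
        · simp only [add_smul, mul_smul, sub_smul]
          rw [Finset.sum_add_distrib, ← Finset.smul_sum, Finset.sum_sub_distrib, hxs, hys]
        · exact U.add_mem hx.1.2 (U.smul_mem _ (U.sub_mem hx.1.2 hy.1.2))
      have hseg : x ∈ openSegment ℝ y (x + ε • (x - y)) := by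
        refine ⟨ε / (1 + ε), 1 / (1 + ε), by positivity, by positivity, by field_simp; ring, ?_⟩
        have h1 : (1 + ε) ≠ 0 := by positivity
        have : (ε / (1 + ε)) • y + (1 / (1 + ε)) • (x + ε • (x - y))
            = ((1 + ε) / (1 + ε)) • x := by
          module
        rw [this, div_self h1, one_smul]
      exact (hx.2 hy.1 hzK hseg).symm
  refine ⟨hfin.toFinset, ?_⟩
  rw [hfin.coe_toFinset]
  have := closure_convexHull_extremePoints hKc hKconv
  rw [(hfin.isClosed_convexHull (𝕜 := ℝ)).closure_eq] at this
  exact this.symm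



/-- Lemma 3.2(ii) of the paper: if every face `Q` of the polytope `P` meeting the
subspace `U` does so transversally through its relative interior, then `P ∩ U` is
a polytope of dimension `n - g`, and `F ↦ F ∩ U` is a bijection from the facets of
`P` meeting `U` onto the facets of `P ∩ U`. -/
theorem stmt7 (n g : ℕ) (hn : 2 ≤ n) (hg1 : 1 ≤ g) (hg2 : g ≤ n - 1)
    (S : Finset (EuclideanSpace ℝ (Fin n)))
    (P : Set (EuclideanSpace ℝ (Fin n)))
    (hP : P = convexHull ℝ (S : Set (EuclideanSpace ℝ (Fin n))))
    (hint : (interior P).Nonempty)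
    (U : Submodule ℝ (EuclideanSpace ℝ (Fin n)))
    (hU : Module.finrank ℝ U = n - g)
    (hPU : (P ∩ (U : Set (EuclideanSpace ℝ (Fin n)))).Nonempty)
    (hgen : ∀ Q : Set (EuclideanSpace ℝ (Fin n)), IsFaceOf P Q →
      (Q ∩ (U : Set (EuclideanSpace ℝ (Fin n)))).Nonempty →
        (intrinsicInterior ℝ Q ∩ (U : Set (EuclideanSpace ℝ (Fin n)))).Nonempty ∧
          (affineSpan ℝ Q).direction ⊔ U = ⊤) :
    (∃ t : Finset (EuclideanSpace ℝ (Fin n)),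
        P ∩ (U : Set (EuclideanSpace ℝ (Fin n)))
          = convexHull ℝ (t : Set (EuclideanSpace ℝ (Fin n)))) ∧
      setDim (P ∩ (U : Set (EuclideanSpace ℝ (Fin n)))) = n - g ∧
      Set.BijOn (fun F => F ∩ (U : Set (EuclideanSpace ℝ (Fin n))))
        {F | IsFaceOf P F ∧ setDim F = n - 1 ∧
          (F ∩ (U : Set (EuclideanSpace ℝ (Fin n)))).Nonempty}
        {F' | IsFaceOf (P ∩ (U : Set (EuclideanSpace ℝ (Fin n)))) F' ∧
          setDim F' = n - g - 1} := by
  classical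
  have hcomp : IsCompact P := by rw [hP]; exact S.finite_toSet.isCompact_convexHull (𝕜 := ℝ)
  have hconv : Convex ℝ P := by rw [hP]; exact convex_convexHull ℝ _
  have hcompU : IsCompact (P ∩ (U : Set (EuclideanSpace ℝ (Fin n)))) :=
    hcomp.inter_right U.closed_of_finiteDimensional
  have hconvU : Convex ℝ (P ∩ (U : Set (EuclideanSpace ℝ (Fin n)))) := hconv.inter U.convex
  have htop : affineSpan ℝ P = ⊤ := affineSpan_eq_top_of_nonempty_interior
    (by rwa [hconv.convexHull_eq])
  have hPface : IsFaceOf P P := by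
    have h := aux_face' (C := P) (φ := 0) (c := 0) (by simp)
      (by simpa using hPU.mono inter_subset_left)
    simpa using h
  have hdim : ∀ W : Submodule ℝ (EuclideanSpace ℝ (Fin n)), W ⊔ U = ⊤ →
      n + Module.finrank ℝ (W ⊓ U : Submodule ℝ (EuclideanSpace ℝ (Fin n)))
        = Module.finrank ℝ W + (n - g) := by
    intro W hW
    have h := Submodule.finrank_sup_add_finrank_inf_eq W U
    rw [hW, finrank_top, finrank_euclideanSpace_fin, hU] at h
    exact h
  have hdimPU : setDim (P ∩ (U : Set (EuclideanSpace ℝ (Fin n)))) = n - g := by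
    obtain ⟨⟨z, hz, hzU⟩, -⟩ := hgen P hPface hPU
    rw [setDim, aux_dir hz hzU, htop, AffineSubspace.direction_top, top_inf_eq, hU]
  refine ⟨by rw [hP]; exact aux_poly S U, hdimPU, ?_, ?_, ?_⟩
  · -- maps to
    rintro F ⟨hF, hFd, hFU⟩
    obtain ⟨⟨z, hz, hzU⟩, htr⟩ := hgen F hF hFU
    refine ⟨?_, ?_⟩
    · obtain ⟨-, φ, c, hle, rfl⟩ := aux_face hcomp hF
      have h := aux_face' (C := P ∩ (U : Set (EuclideanSpace ℝ (Fin n)))) (φ := φ) (c := c)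
        (fun y hy => hle y hy.1)
        (by
          obtain ⟨y, hy, hyU⟩ := hFU
          exact ⟨y, ⟨hy.1, hyU⟩, hy.2⟩)
      convert h using 1
      ext y
      simp only [mem_inter_iff, mem_ofPred_eq]
      tauto
    · have h := hdim _ htr
      rw [← aux_dir hz hzU] at h
      unfold setDim at hFd ⊢
      rw [hFd] at h
      show Module.finrank ℝ (affineSpan ℝ (F ∩ (U : Set (EuclideanSpace ℝ (Fin n))))).direction = _
      omega
  · -- injective
    have key : ∀ F₁ F₂ : Set (EuclideanSpace ℝ (Fin n)), IsFaceOf P F₁ → IsFaceOf P F₂ →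
        (F₁ ∩ (U : Set (EuclideanSpace ℝ (Fin n)))).Nonempty →
        F₁ ∩ (U : Set (EuclideanSpace ℝ (Fin n))) = F₂ ∩ (U : Set (EuclideanSpace ℝ (Fin n))) →
        F₁ ⊆ F₂ := by
      intro F₁ F₂ h1 h2 hne heq x hx
      obtain ⟨⟨z, hz, hzU⟩, -⟩ := hgen F₁ h1 hne
      have hz1 := intrinsicInterior_subset hz
      have hz2 : z ∈ F₂ := by
        have : z ∈ F₁ ∩ (U : Set (EuclideanSpace ℝ (Fin n))) := ⟨hz1, hzU⟩
        rw [heq] at this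
        exact this.1
      obtain ⟨-, φ₁, c₁, -, hF1⟩ := aux_face hcomp h1
      obtain ⟨-, φ, c, hle, rfl⟩ := aux_face hcomp h2
      have hsub : F₁ ⊆ P := by rw [hF1]; exact fun y hy => hy.1
      have h0 : ⟪x - z, φ⟫ = 0 := by
        refine aux_zero (T := univ) hz ?_ ?_ (fun _ => mem_univ _)
        · exact AffineSubspace.vsub_mem_direction (subset_affineSpan _ _ hx)
            (subset_affineSpan _ _ hz1)
        · intro y hy _
          rw [hz2.2]
          exact hle y (hsub hy)
      rw [inner_sub_left, hz2.2] at h0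
      exact ⟨hsub hx, by linarith⟩
    rintro F₁ ⟨h1, -, h1U⟩ F₂ ⟨h2, -, h2U⟩ heq
    exact Subset.antisymm (key F₁ F₂ h1 h2 h1U heq) (key F₂ F₁ h2 h1 h2U heq.symm)
  · -- surjective
    rintro F' ⟨hF', hFd⟩
    obtain ⟨⟨f, hf⟩, φ, c, hle, hFeq⟩ := aux_face hcompU hF'
    have hFsub : ∀ x ∈ F', x ∈ P ∩ (U : Set (EuclideanSpace ℝ (Fin n))) := by
      intro x hx
      rw [hFeq] at hx
      exact hx.1
    have hFc : ∀ x ∈ F', ⟪x, φ⟫ = c := by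
      intro x hx
      rw [hFeq] at hx
      exact hx.2
    have hFconv : Convex ℝ F' := by
      intro x hx y hy a b ha hb hab
      rw [hFeq]
      refine ⟨hconvU (hFsub x hx) (hFsub y hy) ha hb hab, ?_⟩
      rw [inner_add_left, real_inner_smul_left, real_inner_smul_left, hFc x hx, hFc y hy,
        ← add_mul, hab, one_mul]
    have hdisj : Disjoint (interior P) F' := by
      rw [Set.disjoint_left]
      intro x hxi hxF
      have hz : x ∈ intrinsicInterior ℝ P := interior_subset_intrinsicInterior hxi
      have h0 : ∀ v ∈ U, ⟪v, φ⟫ = 0 := by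
        intro v hv
        refine aux_zero (T := (U : Set (EuclideanSpace ℝ (Fin n)))) hz ?_ ?_ ?_
        · rw [htop, AffineSubspace.direction_top]; trivial
        · intro y hy hyU
          rw [hFc x hxF]
          exact hle y ⟨hy, hyU⟩
        · intro t
          exact U.add_mem (hFsub x hxF).2 (U.smul_mem _ hv)
      have hFall : F' = P ∩ (U : Set (EuclideanSpace ℝ (Fin n))) := by
        apply Subset.antisymm hFsub
        intro y hy
        rw [hFeq]
        refine ⟨hy, ?_⟩
        rw [h0 y hy.2, ← hFc x hxF, h0 x (hFsub x hxF).2]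
      rw [hFall, hdimPU] at hFd
      omega
    obtain ⟨L, u, hL1, hL2⟩ := geometric_hahn_banach_open hconv.interior isOpen_interior hFconv hdisj
    obtain ⟨ψ, hψ⟩ : ∃ ψ : EuclideanSpace ℝ (Fin n), ∀ x, ⟪x, ψ⟫ = L x := by
      refine ⟨(InnerProductSpace.toDual ℝ _).symm L, fun x => ?_⟩
      rw [real_inner_comm, InnerProductSpace.toDual_symm_apply]
    have hPle : ∀ y ∈ P, ⟪y, ψ⟫ ≤ u := by
      intro y hy
      have hcl : y ∈ closure (interior P) := by
        rw [hconv.closure_interior_eq_closure_of_nonempty_interior hint]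
        exact subset_closure hy
      have : closure (interior P) ⊆ {y | L y ≤ u} := by
        apply closure_minimal
        · exact fun a ha => (hL1 a ha).le
        · exact isClosed_le L.continuous continuous_const
      rw [hψ]
      exact this hcl
    have hFu : ∀ x ∈ F', ⟪x, ψ⟫ = u := fun x hx =>
      le_antisymm (hPle x (hFsub x hx).1) (by rw [hψ]; exact hL2 x hx)
    set Q : Set (EuclideanSpace ℝ (Fin n)) := {x ∈ P | ⟪x, ψ⟫ = u} with hQ
    have hFQ : F' ⊆ Q := fun x hx => ⟨(hFsub x hx).1, hFu x hx⟩
    have hQface : IsFaceOf P Q := aux_face' hPle ⟨f, hFQ hf⟩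
    have hQU : (Q ∩ (U : Set (EuclideanSpace ℝ (Fin n)))).Nonempty := ⟨f, hFQ hf, (hFsub f hf).2⟩
    obtain ⟨-, htr⟩ := hgen Q hQface hQU
    have hd := hdim _ htr
    have hlt : Module.finrank ℝ (affineSpan ℝ Q).direction < n := by
      have hne : (affineSpan ℝ Q).direction ≠ ⊤ := by
        intro h
        obtain ⟨p, hp⟩ := hint
        have h0 : ⟪p - f, ψ⟫ = 0 := aux_const (F := Q) (c := u) (fun x hx => hx.2)
          (by rw [h]; trivial)
        rw [inner_sub_left, hFu f hf, hψ] at h0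
        have := hL1 p hp
        linarith
      have := Submodule.finrank_lt hne
      rwa [finrank_euclideanSpace_fin] at this
    have hsub : (affineSpan ℝ F').direction ≤ (affineSpan ℝ Q).direction ⊓ U := by
      apply le_inf
      · exact AffineSubspace.direction_le (affineSpan_mono ℝ hFQ)
      · rw [direction_affineSpan, vectorSpan_def, Submodule.span_le]
        rintro _ ⟨a, ha, b, hb, rfl⟩
        exact U.sub_mem (hFsub a ha).2 (hFsub b hb).2
    have hmono := Submodule.finrank_mono hsub
    unfold setDim at hFd
    have heq : (affineSpan ℝ F').direction = (affineSpan ℝ Q).direction ⊓ U :=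
      Submodule.eq_of_le_of_finrank_eq hsub (by omega)
    refine ⟨Q, ⟨hQface, ?_, hQU⟩, ?_⟩
    · unfold setDim
      omega
    · apply Subset.antisymm
      · rintro y ⟨hyQ, hyU⟩
        have hmem : y - f ∈ (affineSpan ℝ F').direction := by
          rw [heq]
          exact ⟨AffineSubspace.vsub_mem_direction (subset_affineSpan _ _ hyQ)
            (subset_affineSpan _ _ (hFQ hf)), U.sub_mem hyU (hFsub f hf).2⟩
        have h0 := aux_const hFc hmem
        rw [inner_sub_left, hFc f hf] at h0
        rw [hFeq]
        exact ⟨⟨hyQ.1, hyU⟩, by linarith⟩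
      · exact fun x hx => ⟨hFQ hx, (hFsub x hx).2⟩
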